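/- arXiv:1905.08445 — 6 statements merged into one kernel-verified Lean document; each statement's English description precedes it below -/
import Mathlib

section
/- Under Assumption H1 (with Lipschitz constant L > 0 for ∇f), the function g is prox-bounded with threshold at least 1/L: for every λ > 0 with λ·L < 1 and every x ∈ ℝ^n, the function w ↦ g(w) + ‖w − x‖²/(2λ) is bounded below on ℝ^n. -/
open Set Metric Filter Topology
open scoped RealInnerProductSpace

noncomputable section

variable {E : Type*} [NormedAddCommGroup E] [InnerProductSpace ℝ E] [FiniteDimensional ℝ E]

/-!
The descent lemma bounds `f w` by `f x + f' x (w - x) + L / 2 * ‖w - x‖ ^ 2`. By Young's inequality,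
the slack `ε = λ⁻¹ - L > 0` absorbs the linear term into the quadratic one at the cost of a
constant, so `f w ≤ C + ‖w - x‖ ^ 2 / (2 * λ)`. Hence a lower bound for `f + g` yields one for
`g + ‖· - x‖ ^ 2 / (2 * λ)`. A continuous level-bounded function on a finite-dimensional space
attains its minimum, which provides the lower bound for `f + g`.
-/

section NormedSpace

variable {V W : Type*} [NormedAddCommGroup V] [NormedSpace ℝ V]
  [NormedAddCommGroup W] [NormedSpace ℝ W] {L : ℝ} {x : V}

theorem norm_sub_sub_le_of_norm_fderiv_sub_le {f : V → W} {f' : V → V →L[ℝ] W}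
    (hf : ∀ y, HasFDerivAt f (f' y) y) (hlip : ∀ y, ‖f' y - f' x‖ ≤ L * ‖y - x‖) (y : V) :
    ‖f y - f x - f' x (y - x)‖ ≤ L / 2 * ‖y - x‖ ^ 2 := by
  set v := y - x with hv
  let remainder : ℝ → W := fun t ↦ f (x + t • v) - f x - t • f' x v
  have hasDerivAt_remainder (t : ℝ) :
      HasDerivAt remainder ((f' (x + t • v) - f' x) v) t := by
    have hline : HasDerivAt (fun s : ℝ ↦ x + s • v) v t := by
      simpa using ((hasDerivAt_id t).smul_const v).const_add x
    have hlinear : HasDerivAt (fun s : ℝ ↦ s • f' x v) (f' x v) t := by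
      simpa using (hasDerivAt_id t).smul_const (f' x v)
    exact (((hf _).comp_hasDerivAt t hline).sub_const (f x)).sub hlinear
  have hasDerivAt_bound (t : ℝ) :
      HasDerivAt (fun s : ℝ ↦ L / 2 * ‖v‖ ^ 2 * s ^ 2) (L * ‖v‖ ^ 2 * t) t :=
    ((hasDerivAt_pow 2 t).const_mul (L / 2 * ‖v‖ ^ 2)).congr_deriv (by push_cast; ring)
  have norm_deriv_le (t : ℝ) (ht : t ∈ Ico (0 : ℝ) 1) :
      ‖(f' (x + t • v) - f' x) v‖ ≤ L * ‖v‖ ^ 2 * t :=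
    calc ‖(f' (x + t • v) - f' x) v‖
        ≤ ‖f' (x + t • v) - f' x‖ * ‖v‖ := ContinuousLinearMap.le_opNorm _ _
      _ ≤ L * ‖x + t • v - x‖ * ‖v‖ := by gcongr; exact hlip _
      _ = L * ‖v‖ ^ 2 * t := by
        rw [add_sub_cancel_left, norm_smul, Real.norm_of_nonneg ht.1]; ring
  have hone : ‖remainder 1‖ ≤ L / 2 * ‖v‖ ^ 2 * 1 ^ 2 :=
    image_norm_le_of_norm_deriv_right_le_deriv_boundary
      (fun t _ ↦ (hasDerivAt_remainder t).continuousAt.continuousWithinAt)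
      (fun t _ ↦ (hasDerivAt_remainder t).hasDerivWithinAt)
      (by simp [remainder]) hasDerivAt_bound norm_deriv_le (right_mem_Icc.2 zero_le_one)
  simpa [remainder, hv] using hone

variable {f : V → ℝ} {f' : V → V →L[ℝ] ℝ}

theorem le_add_mul_norm_sub_sq_of_norm_fderiv_sub_le (hf : ∀ y, HasFDerivAt f (f' y) y)
    (hlip : ∀ y, ‖f' y - f' x‖ ≤ L * ‖y - x‖) {ε : ℝ} (hε : 0 < ε) (y : V) :
    f y ≤ f x + ε⁻¹ / 2 * ‖f' x‖ ^ 2 + (L + ε) / 2 * ‖y - x‖ ^ 2 := by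
  have descent : f y - f x - f' x (y - x) ≤ L / 2 * ‖y - x‖ ^ 2 :=
    (Real.le_norm_self _).trans (norm_sub_sub_le_of_norm_fderiv_sub_le hf hlip y)
  have linear_le : f' x (y - x) ≤ ‖f' x‖ * ‖y - x‖ :=
    (Real.le_norm_self _).trans ((f' x).le_opNorm _)
  have young : 2 * ‖y - x‖ * ‖f' x‖ ≤ ε * ‖y - x‖ ^ 2 + ε⁻¹ * ‖f' x‖ ^ 2 :=
    two_mul_le_add_mul_sq hε
  linarith

theorem stmt0_general {g : V → ℝ} (hf : ∀ y, HasFDerivAt f (f' y) y)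
    (hlip : ∀ y, ‖f' y - f' x‖ ≤ L * ‖y - x‖) (hbdd : BddBelow (range fun y ↦ f y + g y))
    {lam : ℝ} (hlam : 0 < lam) (hlamL : lam * L < 1) :
    BddBelow (range fun w ↦ g w + ‖w - x‖ ^ 2 / (2 * lam)) := by
  obtain ⟨m, hm⟩ := hbdd
  have slack_pos : 0 < lam⁻¹ - L := by
    rw [sub_pos, ← one_div, lt_div_iff₀' hlam]
    exact hlamL
  refine ⟨m - (f x + (lam⁻¹ - L)⁻¹ / 2 * ‖f' x‖ ^ 2), forall_mem_range.2 fun w ↦ ?_⟩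
  have lower : m ≤ f w + g w := hm (mem_range_self w)
  have upper := le_add_mul_norm_sub_sq_of_norm_fderiv_sub_le hf hlip slack_pos w
  have coeff : (L + (lam⁻¹ - L)) / 2 * ‖w - x‖ ^ 2 = ‖w - x‖ ^ 2 / (2 * lam) := by
    field_simp
    ring
  linarith

end NormedSpace

theorem bddBelow_range_of_isBounded_sublevel {X α : Type*} [PseudoMetricSpace X] [ProperSpace X]
    [LinearOrder α] [TopologicalSpace α] [OrderClosedTopology α] {F : X → α} (hF : Continuous F)
    (x₀ : X) (hlevel : Bornology.IsBounded {x | F x ≤ F x₀}) : BddBelow (range F) := by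
  obtain ⟨x, hx⟩ := hF.exists_forall_le_of_isBounded x₀ hlevel
  exact ⟨F x, forall_mem_range.2 hx⟩

/-- Under Assumption H1 the function `g` is prox-bounded with threshold at least `1/L`:
for every `λ > 0` with `λ·L < 1` and every `x`, the function
`w ↦ g w + ‖w - x‖²/(2λ)` is bounded below. -/
theorem stmt0
    (f g : E → ℝ) (f' : E → E) (L : ℝ)
    (hL : 0 < L)
    (hf : ∀ x, HasGradientAt f (f' x) x)
    (hlip : ∀ x y, ‖f' x - f' y‖ ≤ L * ‖x - y‖)
    (hg : Continuous g)
    (hlevel : ∀ r : ℝ, Bornology.IsBounded {x : E | f x + g x ≤ r})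
    :
    ∀ lam : ℝ, 0 < lam → lam * L < 1 →
      ∀ x : E, BddBelow (Set.range fun w : E => g w + ‖w - x‖ ^ 2 / (2 * lam)) := by
  have hfg : Continuous fun y ↦ f y + g y :=
    (continuous_iff_continuousAt.2 fun y ↦ (hf y).continuousAt).add hg
  exact fun _ hlam hlamL x ↦ stmt0_general (fun y ↦ (hf y).hasFDerivAt)
    (fun y ↦ by simpa only [← map_sub, LinearIsometryEquiv.norm_map] using hlip y x)
    (bddBelow_range_of_isBounded_sublevel hfg 0 (hlevel _)) hlam hlamL
end
end

section
/- Let f : ℝ^n → ℝ be differentiable with L-Lipschitz gradient ∇f (L ≥ 0) and let g : ℝ^n → ℝ be any function. Then for every x ∈ ℝ^n the proximal subdifferential satisfies the exact sum rule ∂_P(f + g)(x) = {∇f(x) + ξ : ξ ∈ ∂_P g(x)}. -/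
/-!
A function whose gradient is Lipschitz is squeezed near each point between two paraboloids
tangent to its graph, so `∇f x ∈ ∂_P f x` and `-∇f x ∈ ∂_P (-f) x`. Since
`∂_P f x + ∂_P g x ⊆ ∂_P (f + g) x` always holds, adding `f` to `g` gives one inclusion, and
adding `-f` to `f + g` gives the other.
-/

open Set Metric Filter Topology
open scoped RealInnerProductSpace

noncomputable section

variable {E : Type*} [NormedAddCommGroup E] [InnerProductSpace ℝ E] [FiniteDimensional ℝ E]

/-- The proximal subdifferential of `ψ` at `x`. -/
def proxSubdiff (ψ : E → ℝ) (x : E) : Set E :=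
  {ξ | ∃ ρ > (0:ℝ), ∃ η > (0:ℝ), ∀ y, ‖y - x‖ < η →
    ψ y ≥ ψ x + ⟪ξ, y - x⟫ - ρ * ‖y - x‖ ^ 2}

section

open Asymptotics

theorem isBigO_sub_sub_fderiv {𝕜 V W : Type*} [RCLike 𝕜]
    [NormedAddCommGroup V] [NormedSpace 𝕜 V] [NormedAddCommGroup W] [NormedSpace 𝕜 W]
    {f : V → W} {f' : V → V →L[𝕜] W} {x : V} {n : ℕ}
    (hf : ∀ᶠ y in 𝓝 x, HasFDerivAt f (f' y) y)
    (hf' : (fun y => f' y - f' x) =O[𝓝 x] fun y => ‖y - x‖ ^ n) :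
    (fun y => f y - f x - f' x (y - x)) =O[𝓝 x] fun y => ‖y - x‖ ^ (n + 1) := by
  let _ : NormedSpace ℝ V := .restrictScalars ℝ 𝕜 V
  obtain ⟨C, hC, hbound⟩ := hf'.exists_pos
  obtain ⟨ε, hε, hball⟩ := eventually_nhds_iff_ball.1 (hf.and hbound.bound)
  refine .of_bound C (eventually_nhds_iff_ball.2 ⟨ε, hε, fun y hy => ?_⟩)
  have hsub : closedBall x ‖y - x‖ ⊆ ball x ε :=
    closedBall_subset_ball (mem_ball_iff_norm.1 hy)
  have hderiv : ∀ z ∈ closedBall x ‖y - x‖, ‖f' z - f' x‖ ≤ C * ‖y - x‖ ^ n := fun z hz =>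
    calc ‖f' z - f' x‖ ≤ C * ‖z - x‖ ^ n := by simpa using (hball z (hsub hz)).2
      _ ≤ C * ‖y - x‖ ^ n := by gcongr; exact mem_closedBall_iff_norm.1 hz
  calc ‖f y - f x - f' x (y - x)‖ ≤ C * ‖y - x‖ ^ n * ‖y - x‖ :=
        (convex_closedBall x ‖y - x‖).norm_image_sub_le_of_norm_hasFDerivWithin_le'
          (fun z hz => (hball z (hsub hz)).1.hasFDerivWithinAt) hderiv
          (mem_closedBall_self (norm_nonneg _)) (mem_closedBall_iff_norm.2 le_rfl)
    _ = C * ‖‖y - x‖ ^ (n + 1)‖ := by rw [norm_pow, norm_norm, pow_succ, mul_assoc]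

variable {F : Type*} [NormedAddCommGroup F] [InnerProductSpace ℝ F] {f g : F → ℝ} {x v ξ : F}

theorem mem_proxSubdiff_iff_eventually :
    ξ ∈ proxSubdiff f x ↔
      ∃ ρ > 0, ∀ᶠ y in 𝓝 x, f x + ⟪ξ, y - x⟫ - ρ * ‖y - x‖ ^ 2 ≤ f y := by
  simp only [proxSubdiff, mem_ofPred_eq, ge_iff_le, Metric.eventually_nhds_iff, dist_eq_norm]

theorem add_mem_proxSubdiff_add (hv : v ∈ proxSubdiff f x) (hξ : ξ ∈ proxSubdiff g x) :
    v + ξ ∈ proxSubdiff (f + g) x := by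
  rw [mem_proxSubdiff_iff_eventually] at hv hξ ⊢
  obtain ⟨ρ, hρ, hf⟩ := hv
  obtain ⟨σ, hσ, hg⟩ := hξ
  refine ⟨ρ + σ, add_pos hρ hσ, ?_⟩
  filter_upwards [hf, hg] with y hfy hgy
  rw [Pi.add_apply, Pi.add_apply, inner_add_left]
  linarith

theorem proxSubdiff_add_eq_image (hv : v ∈ proxSubdiff f x) (hv_neg : -v ∈ proxSubdiff (-f) x) :
    proxSubdiff (f + g) x = (v + ·) '' proxSubdiff g x := by
  refine Subset.antisymm (fun ξ hξ => ⟨-v + ξ, ?_, add_neg_cancel_left v ξ⟩)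
    (image_subset_iff.2 fun ξ hξ => add_mem_proxSubdiff_add hv hξ)
  simpa only [neg_add_cancel_left] using add_mem_proxSubdiff_add hv_neg hξ

theorem mem_proxSubdiff_of_isBigO
    (h : (fun y => f y - f x - ⟪v, y - x⟫) =O[𝓝 x] fun y => ‖y - x‖ ^ 2) :
    v ∈ proxSubdiff f x := by
  obtain ⟨C, hC, hbound⟩ := h.exists_pos
  refine mem_proxSubdiff_iff_eventually.2 ⟨C, hC, ?_⟩
  filter_upwards [hbound.bound] with y hy
  rw [norm_pow, norm_norm, Real.norm_eq_abs] at hy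
  linarith [neg_le_of_abs_le hy]

theorem isBigO_sub_sub_inner_gradient [CompleteSpace F] {f' : F → F}
    (hf : ∀ᶠ y in 𝓝 x, HasGradientAt f (f' y) y)
    (hf' : (fun y => f' y - f' x) =O[𝓝 x] fun y => y - x) :
    (fun y => f y - f x - ⟪f' x, y - x⟫) =O[𝓝 x] fun y => ‖y - x‖ ^ 2 := by
  refine isBigO_sub_sub_fderiv (f' := fun y => InnerProductSpace.toDual ℝ F (f' y))
    (hf.mono fun y hy => hy.hasFDerivAt) (.of_norm_left ?_)
  simpa only [← map_sub, LinearIsometryEquiv.norm_map, pow_one] using hf'.norm_norm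

theorem stmt1_general [CompleteSpace F] {f' : F → F}
    (hf : ∀ᶠ y in 𝓝 x, HasGradientAt f (f' y) y)
    (hf' : (fun y => f' y - f' x) =O[𝓝 x] fun y => y - x) :
    proxSubdiff (fun y => f y + g y) x = (fun ξ => f' x + ξ) '' proxSubdiff g x := by
  have htaylor := isBigO_sub_sub_inner_gradient hf hf'
  refine proxSubdiff_add_eq_image (mem_proxSubdiff_of_isBigO htaylor)
    (mem_proxSubdiff_of_isBigO (htaylor.neg_left.congr_left fun y => ?_))
  rw [Pi.neg_apply, Pi.neg_apply, inner_neg_left]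
  ring

end

/-- Exact sum rule for the proximal subdifferential: if `f` is differentiable with
`L`-Lipschitz gradient and `g` is arbitrary, then
`∂_P (f+g)(x) = {∇f x + ξ : ξ ∈ ∂_P g x}`. -/
theorem stmt1 (f g : E → ℝ) (f' : E → E) (L : ℝ) (hL : 0 ≤ L)
    (hf : ∀ x, HasGradientAt f (f' x) x)
    (hlip : ∀ x y, ‖f' x - f' y‖ ≤ L * ‖x - y‖) :
    ∀ x : E, proxSubdiff (fun y => f y + g y) x = (fun ξ => f' x + ξ) '' proxSubdiff g x := by
  intro x
  exact stmt1_general (.of_forall hf) (.of_bound L (.of_forall fun y => hlip y x))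
end
end

section
/- Under Assumption H1 and the Bregman setting, if 0 < ε < m/L, then for every x ∈ ℝ^n the set T(x) of global minimizers of y ↦ ⟨∇f(x), y − x⟩ + g(y) + D(x,y)/ε is nonempty and compact. -/
open Set Metric Filter Topology
open scoped RealInnerProductSpace

noncomputable section

variable {E : Type*} [NormedAddCommGroup E] [InnerProductSpace ℝ E] [FiniteDimensional ℝ E]

/-- The Bregman distance generated by `K` (with gradient `K'`). -/
def bregD (K : E → ℝ) (K' : E → E) (x y : E) : ℝ := K y - K x - ⟪K' x, y - x⟫

/-- The Bregman proximal mapping: the set of global minimizers of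
`y ↦ ⟪∇f x, y - x⟫ + g y + D(x,y)/ε`. -/
def bregT (f' : E → E) (g : E → ℝ) (K : E → ℝ) (K' : E → E) (ε : ℝ) (x : E) : Set E :=
  {y | ∀ z, ⟪f' x, y - x⟫ + g y + bregD K K' x y / ε ≤ ⟪f' x, z - x⟫ + g z + bregD K K' x z / ε}

/-- The Bregman proximal envelope. -/
def bregEnv (f : E → ℝ) (f' : E → E) (g : E → ℝ) (K : E → ℝ) (K' : E → E) (ε : ℝ) (x : E) : ℝ :=
  ⨅ y : E, (f x + ⟪f' x, y - x⟫ + g y + bregD K K' x y / ε)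

/-!
By the descent lemma, `f y ≤ f x + ⟪∇f x, y - x⟫ + L / 2 * ‖y - x‖ ^ 2`, and strong convexity of
`K` gives `D(x, y) / ε ≥ m / (2 * ε) * ‖y - x‖ ^ 2 ≥ L / 2 * ‖y - x‖ ^ 2`. So, up to the constant
`f x`, the proximal objective at `x` majorizes `F = f + g`, with equality at `y = x`. Its sublevel
set through `x` is therefore contained in the bounded set `{F ≤ F x}`, and the minimizers of a lower
semicontinuous function with a nonempty compact sublevel set form a nonempty compact set.
-/

section DescentLemma

variable {V W : Type*} [NormedAddCommGroup V] [NormedSpace ℝ V]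
  [NormedAddCommGroup W] [NormedSpace ℝ W]

theorem norm_image_sub_sub_fderiv_le_of_norm_fderiv_sub_le {f : V → W} {f' : V → V →L[ℝ] W}
    {s : Set V} {x y : V} {L : ℝ} (hs : Convex ℝ s)
    (hf : ∀ z ∈ s, HasFDerivWithinAt f (f' z) s z)
    (hlip : ∀ z ∈ s, ‖f' z - f' x‖ ≤ L * ‖z - x‖) (hx : x ∈ s) (hy : y ∈ s) :
    ‖f y - f x - f' x (y - x)‖ ≤ L / 2 * ‖y - x‖ ^ 2 := by
  let γ : ℝ → V := AffineMap.lineMap x y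
  have hγs : MapsTo γ (Icc 0 1) s := fun t ht ↦ hs.lineMap_mem hx hy ht
  have hγ' (t : ℝ) : HasDerivAt γ (y - x) t := AffineMap.hasDerivAt_lineMap
  have hremainder : ∀ t ∈ Icc (0 : ℝ) 1,
      HasDerivWithinAt (fun t ↦ f (γ t) - f x - t • f' x (y - x))
        ((f' (γ t) - f' x) (y - x)) (Icc 0 1) t := by
    intro t ht
    have hfγ := (hf (γ t) (hγs ht)).comp_hasDerivWithinAt t (hγ' t).hasDerivWithinAt hγs
    have hlinear : HasDerivAt (fun t : ℝ ↦ t • f' x (y - x)) (f' x (y - x)) t :=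
      ((hasDerivAt_id t).smul_const _).congr_deriv (one_smul ℝ _)
    exact (hfγ.sub_const (f x)).sub hlinear.hasDerivWithinAt
  have hquadratic (t : ℝ) :
      HasDerivAt (fun t ↦ L / 2 * ‖y - x‖ ^ 2 * t ^ 2) (L * ‖y - x‖ ^ 2 * t) t := by
    refine ((hasDerivAt_pow 2 t).const_mul (L / 2 * ‖y - x‖ ^ 2)).congr_deriv ?_
    push_cast
    ring
  have hbound : ∀ t ∈ Ico (0 : ℝ) 1, ‖(f' (γ t) - f' x) (y - x)‖ ≤ L * ‖y - x‖ ^ 2 * t := by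
    intro t ht
    calc ‖(f' (γ t) - f' x) (y - x)‖
        ≤ ‖f' (γ t) - f' x‖ * ‖y - x‖ := ContinuousLinearMap.le_opNorm _ _
      _ ≤ L * ‖γ t - x‖ * ‖y - x‖ := by gcongr; exact hlip _ (hγs (Ico_subset_Icc_self ht))
      _ = L * ‖y - x‖ ^ 2 * t := by
        have hγx : γ t - x = t • (y - x) := AffineMap.lineMap_vsub_left x y t
        rw [hγx, norm_smul, Real.norm_of_nonneg ht.1]
        ring
  have hle := image_norm_le_of_norm_deriv_right_le_deriv_boundary
    (fun t ht ↦ (hremainder t ht).continuousWithinAt)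
    (fun t ht ↦ (hremainder t (Ico_subset_Icc_self ht)).mono_of_mem_nhdsWithin
      (Icc_mem_nhdsGE_of_mem ht))
    (by simp [γ]) hquadratic hbound (right_mem_Icc.2 zero_le_one)
  simpa only [γ, AffineMap.lineMap_apply_one, one_smul, one_pow, mul_one] using hle

theorem le_add_inner_add_sq_of_norm_gradient_sub_le {H : Type*} [NormedAddCommGroup H]
    [InnerProductSpace ℝ H] [CompleteSpace H] {f : H → ℝ} {f' : H → H} {x : H} {L : ℝ}
    (hf : ∀ z, HasGradientAt f (f' z) z) (hlip : ∀ z, ‖f' z - f' x‖ ≤ L * ‖z - x‖) (y : H) :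
    f y ≤ f x + ⟪f' x, y - x⟫ + L / 2 * ‖y - x‖ ^ 2 := by
  have hTaylor := norm_image_sub_sub_fderiv_le_of_norm_fderiv_sub_le (y := y) convex_univ
    (fun z _ ↦ (hf z).hasFDerivAt.hasFDerivWithinAt)
    (fun z _ ↦ by simpa only [← map_sub, LinearIsometryEquiv.norm_map] using hlip z)
    (mem_univ x) (mem_univ y)
  rw [InnerProductSpace.toDual_apply_apply] at hTaylor
  linarith [le_of_abs_le hTaylor]

end DescentLemma

theorem nonempty_and_isCompact_setOf_forall_le {α β : Type*} [TopologicalSpace α] [LinearOrder β]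
    {φ : α → β} (hφ : LowerSemicontinuous φ) {x : α} (hx : IsCompact {y | φ y ≤ φ x}) :
    {y | ∀ z, φ y ≤ φ z}.Nonempty ∧ IsCompact {y | ∀ z, φ y ≤ φ z} := by
  obtain ⟨y, hyx, hy⟩ := (hφ.lowerSemicontinuousOn _).exists_isMinOn ⟨x, le_refl (φ x)⟩ hx
  have hmin (z : α) : φ y ≤ φ z :=
    (le_total (φ z) (φ x)).elim (fun hz ↦ hy hz) (fun hz ↦ hyx.trans hz)
  refine ⟨⟨y, hmin⟩, hx.of_isClosed_subset ?_ fun z hz ↦ hz x⟩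
  have hsublevel : {z | ∀ w, φ z ≤ φ w} = φ ⁻¹' Iic (φ y) :=
    Subset.antisymm (fun z hz ↦ hz y) fun z hz w ↦ hz.trans (hmin w)
  exact hsublevel ▸ hφ.isClosed_preimage (φ y)

section BregmanObjective

variable {H : Type*} [NormedAddCommGroup H] [InnerProductSpace ℝ H]

/-- The objective `y ↦ ⟪∇f x, y - x⟫ + g y + D(x,y)/ε` of the Bregman proximal subproblem at `x`;
its set of global minimizers is `bregT f' g K K' ε x`. -/
def bregObj (f' : H → H) (g : H → ℝ) (K : H → ℝ) (K' : H → H) (ε : ℝ) (x y : H) : ℝ :=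
  ⟪f' x, y - x⟫ + g y + bregD K K' x y / ε

variable {f g K : H → ℝ} {f' K' : H → H} {L m ε : ℝ} {x y : H}

theorem bregObj_self : bregObj f' g K K' ε x x = g x := by
  simp [bregObj, bregD]

theorem lowerSemicontinuous_bregObj (hg : LowerSemicontinuous g) (hK : Continuous K) :
    LowerSemicontinuous (bregObj f' g K K' ε x) := by
  have hinner : Continuous fun y ↦ ⟪f' x, y - x⟫ := by fun_prop
  have hD : Continuous fun y ↦ bregD K K' x y / ε := by
    unfold bregD
    fun_prop
  exact (hinner.lowerSemicontinuous.add hg).add hD.lowerSemicontinuous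

theorem half_mul_sq_le_bregD_div
    (hK : K x + ⟪K' x, y - x⟫ + m / 2 * ‖y - x‖ ^ 2 ≤ K y)
    (hε : 0 < ε) (hεL : ε * L ≤ m) :
    L / 2 * ‖y - x‖ ^ 2 ≤ bregD K K' x y / ε := by
  rw [le_div_iff₀ hε]
  calc L / 2 * ‖y - x‖ ^ 2 * ε = ε * L / 2 * ‖y - x‖ ^ 2 := by ring
    _ ≤ m / 2 * ‖y - x‖ ^ 2 := by gcongr
    _ ≤ bregD K K' x y := by
      unfold bregD
      linarith

theorem add_le_add_bregObj [CompleteSpace H] (hf : ∀ z, HasGradientAt f (f' z) z)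
    (hlip : ∀ z, ‖f' z - f' x‖ ≤ L * ‖z - x‖)
    (hK : K x + ⟪K' x, y - x⟫ + m / 2 * ‖y - x‖ ^ 2 ≤ K y)
    (hε : 0 < ε) (hεL : ε * L ≤ m) :
    f y + g y ≤ f x + bregObj f' g K K' ε x y := by
  have hdescent := le_add_inner_add_sq_of_norm_gradient_sub_le hf hlip y
  have hbreg := half_mul_sq_le_bregD_div hK hε hεL
  unfold bregObj
  linarith

end BregmanObjective

theorem stmt2_general {f g K : E → ℝ} {f' K' : E → E} {L m ε : ℝ} {x : E}
    (hf : ∀ z, HasGradientAt f (f' z) z)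
    (hlip : ∀ z, ‖f' z - f' x‖ ≤ L * ‖z - x‖)
    (hg : LowerSemicontinuous g)
    (hlevel : Bornology.IsBounded {y | f y + g y ≤ f x + g x})
    (hK : ∀ z, HasGradientAt K (K' z) z)
    (hKstrong : ∀ y, K x + ⟪K' x, y - x⟫ + m / 2 * ‖y - x‖ ^ 2 ≤ K y)
    (hε : 0 < ε) (hεL : ε * L ≤ m) :
    (bregT f' g K K' ε x).Nonempty ∧ IsCompact (bregT f' g K K' ε x) := by
  have : ProperSpace E := FiniteDimensional.proper ℝ E
  have hK_cont : Continuous K := continuous_iff_continuousAt.2 fun z ↦ (hK z).continuousAt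
  have hlsc : LowerSemicontinuous (bregObj f' g K K' ε x) := lowerSemicontinuous_bregObj hg hK_cont
  refine nonempty_and_isCompact_setOf_forall_le hlsc (x := x) ?_
  refine isCompact_of_isClosed_isBounded (hlsc.isClosed_preimage _) (hlevel.subset fun y hy ↦ ?_)
  calc f y + g y ≤ f x + bregObj f' g K K' ε x y :=
        add_le_add_bregObj hf hlip (hKstrong y) hε hεL
    _ ≤ f x + bregObj f' g K K' ε x x := by gcongr; exact hy
    _ = f x + g x := by rw [bregObj_self]

/-- If `0 < ε < m/L` then for every `x` the set `T(x)` of global minimizers is nonempty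
and compact. -/
theorem stmt2
    (f g : E → ℝ) (f' : E → E) (L : ℝ)
    (hL : 0 < L)
    (hf : ∀ x, HasGradientAt f (f' x) x)
    (hlip : ∀ x y, ‖f' x - f' y‖ ≤ L * ‖x - y‖)
    (hg : Continuous g)
    (hlevel : ∀ r : ℝ, Bornology.IsBounded {x : E | f x + g x ≤ r})
    (K : E → ℝ) (K' : E → E) (m M : ℝ)
    (hm : 0 < m) (hmM : m ≤ M)
    (hK : ∀ x, HasGradientAt K (K' x) x)
    (hKstrong : ∀ x y : E, K x + ⟪K' x, y - x⟫ + m / 2 * ‖y - x‖ ^ 2 ≤ K y)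
    (hKlip : ∀ x y, ‖K' x - K' y‖ ≤ M * ‖x - y‖)
    (ε : ℝ) (hε : 0 < ε)
    (hεL : ε * L < m) :
    ∀ x : E, (bregT f' g K K' ε x).Nonempty ∧ IsCompact (bregT f' g K K' ε x) :=
  fun x ↦ stmt2_general hf (hlip · x) hg.lowerSemicontinuous (hlevel (f x + g x)) hK
    (hKstrong x) hε hεL.le
end
end

section
/- Under Assumption H1 and the Bregman setting with 0 < ε < m/L, for every x ∈ ℝ^n and every t ∈ T(x) one has the descent estimates F(t) ≤ E(x) − (1/2)(m/ε − L)‖x − t‖² and F(t) ≤ F(x) − (1/2)(m/ε − L)‖x − t‖², where moreover E(x) = F(x) − ε·G(x). -/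
open Set Metric Filter Topology
open scoped RealInnerProductSpace

noncomputable section

variable {E : Type*} [NormedAddCommGroup E] [InnerProductSpace ℝ E] [FiniteDimensional ℝ E]

/-!
Lipschitz continuity of `∇f` bounds `f t` above by its linearization at `x` plus `L/2 ‖t - x‖²`,
while strong convexity of `K` bounds `D(x,t)/ε` below by `m/(2ε) ‖t - x‖²`. Hence the model
`y ↦ f x + ⟪∇f x, y - x⟫ + g y + D(x,y)/ε` exceeds `F` by at least `(m/ε - L)/2 ‖x - y‖²`.
At a minimizer `t` the model takes the value `E(x)`, and `E(x) ≤ F(x)` by comparing with `y = x`.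
-/

section FirstOrderRemainder

variable {V W H : Type*} [NormedAddCommGroup V] [NormedSpace ℝ V]
  [NormedAddCommGroup W] [NormedSpace ℝ W]
  [NormedAddCommGroup H] [InnerProductSpace ℝ H] [CompleteSpace H] {L : ℝ}

theorem norm_image_sub_sub_le_of_norm_hasFDerivWithin_sub_le {f : V → W} {f' : V → V →L[ℝ] W}
    {s : Set V} {x y : V} (hs : Convex ℝ s) (hf : ∀ z ∈ s, HasFDerivWithinAt f (f' z) s z)
    (hlip : ∀ z ∈ s, ‖f' z - f' x‖ ≤ L * ‖z - x‖) (hx : x ∈ s) (hy : y ∈ s) :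
    ‖f y - f x - f' x (y - x)‖ ≤ L / 2 * ‖y - x‖ ^ 2 := by
  let γ : ℝ → V := AffineMap.lineMap x y
  let remainder : ℝ → W := fun τ => f (γ τ) - f x - τ • f' x (y - x)
  have hγ : MapsTo γ (Icc 0 1) s := hs.mapsTo_lineMap hx hy
  have hderiv : ∀ τ ∈ Icc (0 : ℝ) 1,
      HasDerivWithinAt remainder ((f' (γ τ) - f' x) (y - x)) (Icc 0 1) τ := fun τ hτ => by
    have hfγ := (hf (γ τ) (hγ hτ)).comp_hasDerivWithinAt τ AffineMap.hasDerivWithinAt_lineMap hγ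
    have hlinear := (hasDerivWithinAt_id τ (Icc (0 : ℝ) 1)).smul_const (f' x (y - x))
    rw [sub_apply, ← one_smul ℝ (f' x (y - x))]
    exact (hfγ.sub_const (f x)).sub hlinear
  have hbound : ∀ τ ∈ Ico (0 : ℝ) 1,
      ‖(f' (γ τ) - f' x) (y - x)‖ ≤ L / 2 * ‖y - x‖ ^ 2 * (2 * τ) := fun τ hτ => by
    have hdist : ‖γ τ - x‖ = τ * ‖y - x‖ := by
      rw [← dist_eq_norm, dist_lineMap_left, Real.norm_of_nonneg hτ.1, dist_eq_norm']
    calc ‖(f' (γ τ) - f' x) (y - x)‖ ≤ ‖f' (γ τ) - f' x‖ * ‖y - x‖ :=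
          ContinuousLinearMap.le_opNorm _ _
      _ ≤ L * ‖γ τ - x‖ * ‖y - x‖ := by
          gcongr
          exact hlip _ (hγ (Ico_subset_Icc_self hτ))
      _ = L / 2 * ‖y - x‖ ^ 2 * (2 * τ) := by rw [hdist]; ring
  have hfence := image_norm_le_of_norm_deriv_right_le_deriv_boundary
    (B := fun τ => L / 2 * ‖y - x‖ ^ 2 * τ ^ 2)
    (fun τ hτ => (hderiv τ hτ).continuousWithinAt)
    (fun τ hτ => (hderiv τ (Ico_subset_Icc_self hτ)).mono_of_mem_nhdsWithin
      (Icc_mem_nhdsGE_of_mem hτ))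
    (by simp [remainder, γ])
    (fun τ => by simpa using (hasDerivAt_pow 2 τ).const_mul (L / 2 * ‖y - x‖ ^ 2))
    hbound (right_mem_Icc.2 zero_le_one)
  simpa [remainder, γ] using hfence

theorem le_add_inner_add_of_norm_gradientWithin_sub_le {f : H → ℝ} {f' : H → H} {s : Set H}
    {x y : H} (hs : Convex ℝ s) (hf : ∀ z ∈ s, HasGradientWithinAt f (f' z) s z)
    (hlip : ∀ z ∈ s, ‖f' z - f' x‖ ≤ L * ‖z - x‖) (hx : x ∈ s) (hy : y ∈ s) :
    f y ≤ f x + ⟪f' x, y - x⟫ + L / 2 * ‖y - x‖ ^ 2 := by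
  have hremainder := norm_image_sub_sub_le_of_norm_hasFDerivWithin_sub_le hs
    (fun z hz => (hf z hz).hasFDerivWithinAt)
    (fun z hz => by simpa only [← map_sub, LinearIsometryEquiv.norm_map] using hlip z hz) hx hy
  rw [InnerProductSpace.toDual_apply_apply] at hremainder
  linarith [(Real.le_norm_self _).trans hremainder]

end FirstOrderRemainder

section BregmanModel

variable {H : Type*} [NormedAddCommGroup H] [InnerProductSpace ℝ H]
  {f g K : H → ℝ} {f' K' : H → H} {L m ε : ℝ} {x y t : H}

/-- The Bregman proximal model `y ↦ f x + ⟪∇f x, y - x⟫ + g y + D(x,y)/ε` of `f + g` at `x`: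
its infimum is the Bregman proximal envelope. The constant `f x`, absent from the objective in
`bregT`, does not affect the minimizers. -/
def bregModel (f : H → ℝ) (f' : H → H) (g K : H → ℝ) (K' : H → H) (ε : ℝ) (x y : H) : ℝ :=
  f x + ⟪f' x, y - x⟫ + g y + bregD K K' x y / ε

theorem bregD_self : bregD K K' x x = 0 := by
  simp [bregD]

theorem mul_norm_sub_sq_le_bregD_iff :
    m / 2 * ‖y - x‖ ^ 2 ≤ bregD K K' x y ↔
      K x + ⟪K' x, y - x⟫ + m / 2 * ‖y - x‖ ^ 2 ≤ K y := by
  rw [bregD, sub_sub, le_sub_iff_add_le']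

theorem bregModel_self : bregModel f f' g K K' ε x x = f x + g x := by
  simp [bregModel, bregD_self]

theorem bregModel_le_of_mem_bregT (ht : t ∈ bregT f' g K K' ε x) (y : H) :
    bregModel f f' g K K' ε x t ≤ bregModel f f' g K K' ε x y := by
  have hmin := ht y
  unfold bregModel
  linarith

theorem bregEnv_eq_bregModel_of_mem_bregT (ht : t ∈ bregT f' g K K' ε x) :
    bregEnv f f' g K K' ε x = bregModel f f' g K K' ε x t :=
  IsLeast.csInf_eq ⟨mem_range_self t, forall_mem_range.2 (bregModel_le_of_mem_bregT ht)⟩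

theorem bregEnv_le_of_mem_bregT (ht : t ∈ bregT f' g K K' ε x) :
    bregEnv f f' g K K' ε x ≤ f x + g x := by
  rw [bregEnv_eq_bregModel_of_mem_bregT ht, ← bregModel_self]
  exact bregModel_le_of_mem_bregT ht x

theorem add_le_bregModel_sub (hε : 0 ≤ ε)
    (hf : f y ≤ f x + ⟪f' x, y - x⟫ + L / 2 * ‖y - x‖ ^ 2)
    (hK : m / 2 * ‖y - x‖ ^ 2 ≤ bregD K K' x y) :
    f y + g y ≤ bregModel f f' g K K' ε x y - 1 / 2 * (m / ε - L) * ‖x - y‖ ^ 2 := by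
  have hD : m / 2 * ‖y - x‖ ^ 2 / ε ≤ bregD K K' x y / ε := by gcongr
  calc f y + g y
      ≤ f x + ⟪f' x, y - x⟫ + L / 2 * ‖y - x‖ ^ 2 + g y
          + (bregD K K' x y / ε - m / 2 * ‖y - x‖ ^ 2 / ε) := by linarith
    _ = bregModel f f' g K K' ε x y - 1 / 2 * (m / ε - L) * ‖x - y‖ ^ 2 := by
        rw [bregModel, norm_sub_rev x y]
        ring

end BregmanModel

theorem stmt3_general {H : Type*} [NormedAddCommGroup H] [InnerProductSpace ℝ H]
    [CompleteSpace H] (f g : H → ℝ) (f' : H → H) (L : ℝ)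
    (hf : ∀ x, HasGradientAt f (f' x) x)
    (hlip : ∀ x y, ‖f' x - f' y‖ ≤ L * ‖x - y‖)
    (K : H → ℝ) (K' : H → H) (m : ℝ)
    (_hK : ∀ x, HasGradientAt K (K' x) x)
    (hKstrong : ∀ x y : H, K x + ⟪K' x, y - x⟫ + m / 2 * ‖y - x‖ ^ 2 ≤ K y)
    (ε : ℝ) (hε : 0 < ε) :
    ∀ x : H, ∀ t ∈ bregT f' g K K' ε x,
      (f t + g t ≤ bregEnv f f' g K K' ε x - 1 / 2 * (m / ε - L) * ‖x - t‖ ^ 2) ∧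
      (f t + g t ≤ (f x + g x) - 1 / 2 * (m / ε - L) * ‖x - t‖ ^ 2) ∧
      bregEnv f f' g K K' ε x =
        (f x + g x) - ε * (((f x + g x) - bregEnv f f' g K K' ε x) / ε) := by
  intro x t ht
  have hupper : f t ≤ f x + ⟪f' x, t - x⟫ + L / 2 * ‖t - x‖ ^ 2 :=
    le_add_inner_add_of_norm_gradientWithin_sub_le convex_univ
      (fun z _ => hasGradientWithinAt_univ.2 (hf z)) (fun z _ => hlip z x) (mem_univ x) (mem_univ t)
  have hdescent : f t + g t ≤ bregEnv f f' g K K' ε x - 1 / 2 * (m / ε - L) * ‖x - t‖ ^ 2 := by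
    rw [bregEnv_eq_bregModel_of_mem_bregT ht]
    exact add_le_bregModel_sub hε.le hupper (mul_norm_sub_sq_le_bregD_iff.2 (hKstrong x t))
  refine ⟨hdescent, hdescent.trans ?_, ?_⟩
  · exact sub_le_sub_right (bregEnv_le_of_mem_bregT ht) _
  · rw [mul_div_cancel₀ _ hε.ne', sub_sub_cancel]

/-- Descent estimates for the Bregman proximal mapping, together with
`E(x) = F(x) - ε·G(x)` where `G = (F - E)/ε`. -/
theorem stmt3
    (f g : E → ℝ) (f' : E → E) (L : ℝ)
    (hL : 0 < L)
    (hf : ∀ x, HasGradientAt f (f' x) x)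
    (hlip : ∀ x y, ‖f' x - f' y‖ ≤ L * ‖x - y‖)
    (hg : Continuous g)
    (hlevel : ∀ r : ℝ, Bornology.IsBounded {x : E | f x + g x ≤ r})
    (K : E → ℝ) (K' : E → E) (m M : ℝ)
    (hm : 0 < m) (hmM : m ≤ M)
    (hK : ∀ x, HasGradientAt K (K' x) x)
    (hKstrong : ∀ x y : E, K x + ⟪K' x, y - x⟫ + m / 2 * ‖y - x‖ ^ 2 ≤ K y)
    (hKlip : ∀ x y, ‖K' x - K' y‖ ≤ M * ‖x - y‖)
    (ε : ℝ) (hε : 0 < ε)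
    (hεL : ε * L < m) :
    ∀ x : E, ∀ t ∈ bregT f' g K K' ε x,
      (f t + g t ≤ bregEnv f f' g K K' ε x - 1 / 2 * (m / ε - L) * ‖x - t‖ ^ 2) ∧
      (f t + g t ≤ (f x + g x) - 1 / 2 * (m / ε - L) * ‖x - t‖ ^ 2) ∧
      bregEnv f f' g K K' ε x =
        (f x + g x) - ε * (((f x + g x) - bregEnv f f' g K K' ε x) / ε) :=
  stmt3_general f g f' L hf hlip K K' m hK hKstrong ε hε
end
end

section
/- Under Assumption H1 and the Bregman setting, for every x ∈ ℝ^n and every t ∈ T(x), the vector ξ = ∇f(t) − ∇f(x) − (1/ε)(∇K(t) − ∇K(x)) belongs to the proximal subdifferential ∂_P F(t), and ‖ξ‖ ≤ (L + M/ε)‖x − t‖; in particular, if x ∈ T(x) then 0 ∈ ∂_P F(x). -/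
open Set Metric Filter Topology
open scoped RealInnerProductSpace

noncomputable section

variable {E : Type*} [NormedAddCommGroup E] [InnerProductSpace ℝ E] [FiniteDimensional ℝ E]

/-!
By the three-point identity for the Bregman distance, minimality of `t` says that `g` is bounded
below by the affine function through `t` with slope `-∇f x - (1/ε)(∇K t - ∇K x)`, up to the error
`D(t, y)/ε`. Since `∇K` is Lipschitz this error is `O(‖y - t‖²)`, so the slope is a proximal
subgradient of `g` at `t`. For the same reason `∇f t` is a proximal subgradient of `f` at `t`, and
adding the two gives `ξ`.
-/

section Hilbert

open Asymptotics

variable {H : Type*} [NormedAddCommGroup H] [InnerProductSpace ℝ H]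

theorem mem_proxSubdiff_of_isBigO_s4 {ψ r : H → ℝ} {ξ x : H}
    (hr : r =O[𝓝 x] fun y => ‖y - x‖ ^ 2)
    (hψ : ∀ y, ψ x + ⟪ξ, y - x⟫ + r y ≤ ψ y) : ξ ∈ proxSubdiff ψ x := by
  obtain ⟨C, hC, hbound⟩ := hr.exists_pos
  obtain ⟨η, hη, hball⟩ := Metric.eventually_nhds_iff.1 hbound.bound
  refine ⟨C, hC, η, hη, fun y hy => ?_⟩
  have hry : |r y| ≤ C * ‖y - x‖ ^ 2 := by
    simpa using hball (dist_eq_norm y x ▸ hy)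
  linarith [hψ y, neg_le_of_abs_le hry]

theorem add_mem_proxSubdiff_add_s4 {φ ψ : H → ℝ} {ξ ζ x : H}
    (hξ : ξ ∈ proxSubdiff φ x) (hζ : ζ ∈ proxSubdiff ψ x) :
    ξ + ζ ∈ proxSubdiff (fun y => φ y + ψ y) x := by
  obtain ⟨ρ, hρ, η, hη, hφ⟩ := hξ
  obtain ⟨σ, hσ, δ, hδ, hψ⟩ := hζ
  refine ⟨ρ + σ, add_pos hρ hσ, min η δ, lt_min hη hδ, fun y hy => ?_⟩
  rw [inner_add_left]
  linarith [hφ y (hy.trans_le (min_le_left _ _)), hψ y (hy.trans_le (min_le_right _ _))]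

theorem bregD_three_point (K : H → ℝ) (K' : H → H) (x t y : H) :
    bregD K K' x y = bregD K K' x t + bregD K K' t y + ⟪K' t - K' x, y - t⟫ := by
  have hsplit : ⟪K' x, y - x⟫ = ⟪K' x, y - t⟫ + ⟪K' x, t - x⟫ := by
    rw [← inner_add_right, sub_add_sub_cancel]
  rw [bregD, bregD, bregD, hsplit, inner_sub_left]
  ring

theorem add_inner_sub_bregD_div_le_of_mem_bregT {f' K' : H → H} {g K : H → ℝ} {ε : ℝ} {x t : H}
    (ht : t ∈ bregT f' g K K' ε x) (y : H) :
    g t + ⟪-f' x - (1 / ε) • (K' t - K' x), y - t⟫ - bregD K K' t y / ε ≤ g y := by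
  have hmin := ht y
  have hsplit : ⟪f' x, y - x⟫ = ⟪f' x, y - t⟫ + ⟪f' x, t - x⟫ := by
    rw [← inner_add_right, sub_add_sub_cancel]
  rw [hsplit, bregD_three_point K K' x t y, add_div, add_div] at hmin
  rw [inner_sub_left, inner_neg_left, real_inner_smul_left, one_div_mul_eq_div]
  linarith

theorem neg_sub_smul_mem_proxSubdiff_of_mem_bregT {f' K' : H → H} {g K : H → ℝ} {ε : ℝ} {x t : H}
    (hD : bregD K K' t =O[𝓝 t] fun y => ‖y - t‖ ^ 2) (ht : t ∈ bregT f' g K K' ε x) :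
    -f' x - (1 / ε) • (K' t - K' x) ∈ proxSubdiff g t := by
  have herr : (fun y => -(bregD K K' t y / ε)) =O[𝓝 t] fun y => ‖y - t‖ ^ 2 := by
    simpa only [div_eq_inv_mul] using (hD.const_mul_left ε⁻¹).neg_left
  refine mem_proxSubdiff_of_isBigO_s4 herr fun y => ?_
  simpa only [← sub_eq_add_neg] using add_inner_sub_bregD_div_le_of_mem_bregT ht y

theorem mem_proxSubdiff_of_bregD_isBigO {f : H → ℝ} {f' : H → H} {x : H}
    (hD : bregD f f' x =O[𝓝 x] fun y => ‖y - x‖ ^ 2) : f' x ∈ proxSubdiff f x :=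
  mem_proxSubdiff_of_isBigO_s4 hD fun y => by rw [bregD]; linarith

theorem sub_sub_smul_mem_proxSubdiff_of_mem_bregT {f g K : H → ℝ} {f' K' : H → H} {ε : ℝ}
    {x t : H} (hDf : bregD f f' t =O[𝓝 t] fun y => ‖y - t‖ ^ 2)
    (hDK : bregD K K' t =O[𝓝 t] fun y => ‖y - t‖ ^ 2) (ht : t ∈ bregT f' g K K' ε x) :
    f' t - f' x - (1 / ε) • (K' t - K' x) ∈ proxSubdiff (fun y => f y + g y) t := by
  have hsum := add_mem_proxSubdiff_add_s4 (mem_proxSubdiff_of_bregD_isBigO hDf)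
    (neg_sub_smul_mem_proxSubdiff_of_mem_bregT hDK ht)
  rwa [← add_sub_assoc, ← sub_eq_add_neg] at hsum

theorem abs_bregD_le_of_forall_segment [CompleteSpace H] {f : H → ℝ} {f' : H → H} {x y : H} {C : ℝ}
    (hf : ∀ z ∈ segment ℝ x y, HasGradientAt f (f' z) z)
    (hC : ∀ z ∈ segment ℝ x y, ‖f' z - f' x‖ ≤ C) : |bregD f f' x y| ≤ C * ‖y - x‖ := by
  refine (convex_segment x y).norm_image_sub_le_of_norm_hasFDerivWithin_le'
    (φ := InnerProductSpace.toDual ℝ H (f' x))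
    (fun z hz => (hf z hz).hasFDerivAt.hasFDerivWithinAt) (fun z hz => ?_)
    (left_mem_segment ℝ x y) (right_mem_segment ℝ x y)
  rw [← map_sub, LinearIsometryEquiv.norm_map]
  exact hC z hz

theorem bregD_isBigO_of_isBigO_sub [CompleteSpace H] {f : H → ℝ} {f' : H → H} {x : H}
    (hf : ∀ᶠ y in 𝓝 x, HasGradientAt f (f' y) y)
    (hf' : (fun y => f' y - f' x) =O[𝓝 x] fun y => y - x) :
    bregD f f' x =O[𝓝 x] fun y => ‖y - x‖ ^ 2 := by
  obtain ⟨C, hC, hbound⟩ := hf'.exists_pos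
  obtain ⟨η, hη, hball⟩ := Metric.eventually_nhds_iff_ball.1 (hf.and hbound.bound)
  refine IsBigO.of_bound C ?_
  filter_upwards [ball_mem_nhds x hη] with y hy
  have hseg : segment ℝ x y ⊆ ball x η := (convex_ball x η).segment_subset (mem_ball_self hη) hy
  have hgrad : ∀ z ∈ segment ℝ x y, ‖f' z - f' x‖ ≤ C * ‖y - x‖ := fun z hz =>
    (hball z (hseg hz)).2.trans <| by gcongr; exact norm_sub_le_of_mem_segment hz
  calc ‖bregD f f' x y‖ ≤ C * ‖y - x‖ * ‖y - x‖ :=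
        abs_bregD_le_of_forall_segment (fun z hz => (hball z (hseg hz)).1) hgrad
    _ = C * ‖‖y - x‖ ^ 2‖ := by rw [norm_pow, norm_norm]; ring

theorem bregD_isBigO_of_lipschitz [CompleteSpace H] {f : H → ℝ} {f' : H → H} {L : ℝ}
    (hf : ∀ x, HasGradientAt f (f' x) x) (hlip : ∀ x y, ‖f' x - f' y‖ ≤ L * ‖x - y‖) (x : H) :
    bregD f f' x =O[𝓝 x] fun y => ‖y - x‖ ^ 2 :=
  bregD_isBigO_of_isBigO_sub (.of_forall hf) (.of_bound L (.of_forall fun y => hlip y x))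

theorem norm_sub_sub_smul_sub_le {X V : Type*} [SeminormedAddCommGroup X]
    [SeminormedAddCommGroup V] [NormedSpace ℝ V] {u v : X → V} {L M c : ℝ} (hc : 0 ≤ c)
    (hu : ∀ x y, ‖u x - u y‖ ≤ L * ‖x - y‖) (hv : ∀ x y, ‖v x - v y‖ ≤ M * ‖x - y‖) (x t : X) :
    ‖u t - u x - c • (v t - v x)‖ ≤ (L + c * M) * ‖x - t‖ := by
  calc ‖u t - u x - c • (v t - v x)‖ ≤ ‖u t - u x‖ + ‖c • (v t - v x)‖ := norm_sub_le _ _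
    _ = ‖u t - u x‖ + c * ‖v t - v x‖ := by rw [norm_smul_of_nonneg hc]
    _ ≤ L * ‖t - x‖ + c * (M * ‖t - x‖) := by gcongr; exacts [hu t x, hv t x]
    _ = (L + c * M) * ‖x - t‖ := by rw [norm_sub_rev t x]; ring

theorem stmt4_general [CompleteSpace H] (f g : H → ℝ) (f' : H → H) (L : ℝ)
    (hf : ∀ x, HasGradientAt f (f' x) x)
    (hlip : ∀ x y, ‖f' x - f' y‖ ≤ L * ‖x - y‖)
    (K : H → ℝ) (K' : H → H) (M : ℝ)
    (hK : ∀ x, HasGradientAt K (K' x) x)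
    (hKlip : ∀ x y, ‖K' x - K' y‖ ≤ M * ‖x - y‖)
    (ε : ℝ) (hε : 0 < ε) :
    ∀ x : H, ∀ t ∈ bregT f' g K K' ε x,
      (f' t - f' x - (1 / ε) • (K' t - K' x)) ∈ proxSubdiff (fun y => f y + g y) t ∧
      ‖f' t - f' x - (1 / ε) • (K' t - K' x)‖ ≤ (L + M / ε) * ‖x - t‖ ∧
      (x ∈ bregT f' g K K' ε x → (0 : H) ∈ proxSubdiff (fun y => f y + g y) x) := by
  have hmem : ∀ x : H, ∀ t ∈ bregT f' g K K' ε x,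
      f' t - f' x - (1 / ε) • (K' t - K' x) ∈ proxSubdiff (fun y => f y + g y) t :=
    fun _ t ht => sub_sub_smul_mem_proxSubdiff_of_mem_bregT
      (bregD_isBigO_of_lipschitz hf hlip t) (bregD_isBigO_of_lipschitz hK hKlip t) ht
  intro x t ht
  refine ⟨hmem x t ht, ?_, fun hx => ?_⟩
  · simpa only [one_div_mul_eq_div] using
      norm_sub_sub_smul_sub_le (one_div_nonneg.2 hε.le) hlip hKlip x t
  · simpa only [sub_self, smul_zero] using hmem x x hx

end Hilbert

/-- For every `t ∈ T(x)` the vector `ξ = ∇f t - ∇f x - (1/ε)(∇K t - ∇K x)` belongs to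
`∂_P F(t)`, with `‖ξ‖ ≤ (L + M/ε)‖x - t‖`; in particular `x ∈ T(x)` implies
`0 ∈ ∂_P F(x)`. -/
theorem stmt4
    (f g : E → ℝ) (f' : E → E) (L : ℝ)
    (hL : 0 < L)
    (hf : ∀ x, HasGradientAt f (f' x) x)
    (hlip : ∀ x y, ‖f' x - f' y‖ ≤ L * ‖x - y‖)
    (hg : Continuous g)
    (hlevel : ∀ r : ℝ, Bornology.IsBounded {x : E | f x + g x ≤ r})
    (K : E → ℝ) (K' : E → E) (m M : ℝ)
    (hm : 0 < m) (hmM : m ≤ M)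
    (hK : ∀ x, HasGradientAt K (K' x) x)
    (hKstrong : ∀ x y : E, K x + ⟪K' x, y - x⟫ + m / 2 * ‖y - x‖ ^ 2 ≤ K y)
    (hKlip : ∀ x y, ‖K' x - K' y‖ ≤ M * ‖x - y‖)
    (ε : ℝ) (hε : 0 < ε)
    :
    ∀ x : E, ∀ t ∈ bregT f' g K K' ε x,
      (f' t - f' x - (1 / ε) • (K' t - K' x)) ∈ proxSubdiff (fun y => f y + g y) t ∧
      ‖f' t - f' x - (1 / ε) • (K' t - K' x)‖ ≤ (L + M / ε) * ‖x - t‖ ∧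
      (x ∈ bregT f' g K K' ε x → (0 : E) ∈ proxSubdiff (fun y => f y + g y) x) :=
  stmt4_general f g f' L hf hlip K K' M hK hKlip ε hε
end
end

section
/- Generalized descent inequality (fully nonconvex case): under Assumption H1 and the Bregman setting with ε > 0, for all x, u ∈ ℝ^n and every t ∈ T(x), one has 2·(F(t) − F(u)) ≤ (M/ε + 2 + 3L)·‖u − x‖² − ‖u − t‖² − (m/ε − (L + 2))·‖x − t‖². -/
open Set Metric Filter Topology
open scoped RealInnerProductSpace

noncomputable section

variable {E : Type*} [NormedAddCommGroup E] [InnerProductSpace ℝ E] [FiniteDimensional ℝ E]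

/-!
With `D_h` the Bregman distance of `h` (`D_f` may be negative), minimality of `t` at `x` reads
`F t - F u ≤ D_f(x,t) - D_f(x,u) + (D_K(x,u) - D_K(x,t)) / ε`: the values and the linear terms of
`f` at `x` cancel. A Lipschitz gradient bounds a Bregman distance in absolute value by a multiple of
the squared distance, strong convexity bounds `D_K` from below, and the term `‖u - t‖ ^ 2` is paid
for by `‖u - t‖ ^ 2 ≤ 2 * (‖u - x‖ ^ 2 + ‖x - t‖ ^ 2)`.
-/

theorem norm_sub_sq_le_two_mul {V : Type*} [SeminormedAddCommGroup V] (u x t : V) :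
    ‖u - t‖ ^ 2 ≤ 2 * (‖u - x‖ ^ 2 + ‖x - t‖ ^ 2) :=
  calc ‖u - t‖ ^ 2 ≤ (‖u - x‖ + ‖x - t‖) ^ 2 := by
        gcongr
        exact norm_sub_le_norm_sub_add_norm_sub u x t
    _ ≤ 2 * (‖u - x‖ ^ 2 + ‖x - t‖ ^ 2) := add_sq_le

theorem norm_image_sub_sub_le_of_norm_hasFDerivWithinAt_sub_le {V W : Type*}
    [NormedAddCommGroup V] [NormedSpace ℝ V] [NormedAddCommGroup W] [NormedSpace ℝ W]
    {h : V → W} {h' : V → V →L[ℝ] W} {s : Set V} {x y : V} {C : ℝ} (hs : Convex ℝ s)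
    (hh : ∀ z ∈ s, HasFDerivWithinAt h (h' z) s z)
    (hC : ∀ z ∈ s, ‖h' z - h' x‖ ≤ C * ‖z - x‖) (hx : x ∈ s) (hy : y ∈ s) :
    ‖h y - h x - h' x (y - x)‖ ≤ C / 2 * ‖y - x‖ ^ 2 := by
  set γ : ℝ →ᵃ[ℝ] V := AffineMap.lineMap x y
  have hγ : MapsTo γ (Icc 0 1) s := hs.mapsTo_lineMap hx hy
  have hremainder : ∀ r ∈ Icc (0 : ℝ) 1,
      HasDerivWithinAt (fun r ↦ h (γ r) - h x - r • h' x (y - x))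
        ((h' (γ r) - h' x) (y - x)) (Icc 0 1) r := by
    intro r hr
    have hcomp := (hh (γ r) (hγ hr)).comp_hasDerivWithinAt r AffineMap.hasDerivWithinAt_lineMap hγ
    have hlin := (hasDerivWithinAt_id r (Icc 0 1)).smul_const (h' x (y - x))
    simpa only [sub_apply, one_smul, Function.comp_apply, id]
      using (hcomp.sub_const (h x)).fun_sub hlin
  have hbound : ∀ r ∈ Ico (0 : ℝ) 1,
      ‖(h' (γ r) - h' x) (y - x)‖ ≤ C / 2 * ‖y - x‖ ^ 2 * (2 * r) := by
    intro r hr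
    have hdist : ‖γ r - x‖ = r * ‖y - x‖ := by
      rw [← dist_eq_norm, dist_lineMap_left, Real.norm_of_nonneg hr.1, dist_comm, dist_eq_norm]
    calc ‖(h' (γ r) - h' x) (y - x)‖ ≤ C * ‖γ r - x‖ * ‖y - x‖ :=
          ContinuousLinearMap.le_of_opNorm_le _ (hC _ (hγ (Ico_subset_Icc_self hr))) _
      _ = C / 2 * ‖y - x‖ ^ 2 * (2 * r) := by rw [hdist]; ring
  have hmajorant : ∀ r : ℝ, HasDerivAt (fun r ↦ C / 2 * ‖y - x‖ ^ 2 * r ^ 2)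
      (C / 2 * ‖y - x‖ ^ 2 * (2 * r)) r := fun r ↦ by
    simpa using (hasDerivAt_pow 2 r).const_mul (C / 2 * ‖y - x‖ ^ 2)
  have hle := image_norm_le_of_norm_deriv_right_le_deriv_boundary
    (fun r hr ↦ (hremainder r hr).continuousWithinAt)
    (fun r hr ↦ (hremainder r (Ico_subset_Icc_self hr)).mono_of_mem_nhdsWithin
      (Icc_mem_nhdsGE_of_mem hr))
    (by simp [γ]) hmajorant hbound (right_mem_Icc.2 zero_le_one)
  simpa [γ] using hle

section Bregman

variable {H : Type*} [NormedAddCommGroup H] [InnerProductSpace ℝ H]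
  {f g K : H → ℝ} {f' K' : H → H} {x u t : H} {L m M ε : ℝ}

theorem abs_bregD_le_of_hasGradientAt [CompleteSpace H] (hf : ∀ z, HasGradientAt f (f' z) z)
    (hlip : ∀ z, ‖f' z - f' x‖ ≤ L * ‖z - x‖) (y : H) :
    |bregD f f' x y| ≤ L / 2 * ‖y - x‖ ^ 2 := by
  have h := norm_image_sub_sub_le_of_norm_hasFDerivWithinAt_sub_le (y := y) convex_univ
    (fun z _ ↦ (hf z).hasFDerivAt.hasFDerivWithinAt)
    (fun z _ ↦ by rw [← map_sub, LinearIsometryEquiv.norm_map]; exact hlip z)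
    (mem_univ x) (mem_univ y)
  rwa [InnerProductSpace.toDual_apply_apply] at h

theorem sub_le_bregD_sub_bregD_of_mem_bregT (f : H → ℝ) (ht : t ∈ bregT f' g K K' ε x) (u : H) :
    (f t + g t) - (f u + g u) ≤
      bregD f f' x t - bregD f f' x u + (bregD K K' x u - bregD K K' x t) / ε := by
  have hmin := ht u
  rw [sub_div]
  simp only [bregD] at hmin ⊢
  linarith

theorem two_mul_sub_le_of_mem_bregT (hε : 0 < ε) (ht : t ∈ bregT f' g K K' ε x)
    (hft : bregD f f' x t ≤ L / 2 * ‖t - x‖ ^ 2) (hfu : -(L / 2 * ‖u - x‖ ^ 2) ≤ bregD f f' x u)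
    (hKt : m / 2 * ‖t - x‖ ^ 2 ≤ bregD K K' x t) (hKu : bregD K K' x u ≤ M / 2 * ‖u - x‖ ^ 2) :
    2 * ((f t + g t) - (f u + g u)) ≤
      (M / ε + L) * ‖u - x‖ ^ 2 - (m / ε - L) * ‖x - t‖ ^ 2 := by
  rw [norm_sub_rev x t]
  calc 2 * ((f t + g t) - (f u + g u))
      ≤ 2 * (bregD f f' x t - bregD f f' x u + (bregD K K' x u - bregD K K' x t) / ε) := by
        gcongr
        exact sub_le_bregD_sub_bregD_of_mem_bregT f ht u
    _ ≤ 2 * (L / 2 * ‖t - x‖ ^ 2 - -(L / 2 * ‖u - x‖ ^ 2)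
          + (M / 2 * ‖u - x‖ ^ 2 - m / 2 * ‖t - x‖ ^ 2) / ε) := by gcongr
    _ = (M / ε + L) * ‖u - x‖ ^ 2 - (m / ε - L) * ‖t - x‖ ^ 2 := by ring

theorem stmt6_general [CompleteSpace H]
    (hf : ∀ x, HasGradientAt f (f' x) x)
    (hlip : ∀ x y, ‖f' x - f' y‖ ≤ L * ‖x - y‖)
    (hK : ∀ x, HasGradientAt K (K' x) x)
    (hKstrong : ∀ x y, K x + ⟪K' x, y - x⟫ + m / 2 * ‖y - x‖ ^ 2 ≤ K y)
    (hKlip : ∀ x y, ‖K' x - K' y‖ ≤ M * ‖x - y‖)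
    (hε : 0 < ε) (u : H) (ht : t ∈ bregT f' g K K' ε x) :
    2 * ((f t + g t) - (f u + g u)) ≤
      (M / ε + 2 + L) * ‖u - x‖ ^ 2 - ‖u - t‖ ^ 2 - (m / ε - (L + 2)) * ‖x - t‖ ^ 2 := by
  have hfD := abs_bregD_le_of_hasGradientAt hf (hlip · x)
  have hKD := abs_bregD_le_of_hasGradientAt hK (hKlip · x)
  have hKt : m / 2 * ‖t - x‖ ^ 2 ≤ bregD K K' x t := by
    rw [bregD]
    linarith [hKstrong x t]
  have hdescent := two_mul_sub_le_of_mem_bregT hε ht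
    (abs_le.1 (hfD t)).2 (abs_le.1 (hfD u)).1 hKt (abs_le.1 (hKD u)).2
  linarith [norm_sub_sq_le_two_mul u x t]

end Bregman

/-- Generalized descent inequality in the fully nonconvex case. -/
theorem stmt6
    (f g : E → ℝ) (f' : E → E) (L : ℝ)
    (hL : 0 < L)
    (hf : ∀ x, HasGradientAt f (f' x) x)
    (hlip : ∀ x y, ‖f' x - f' y‖ ≤ L * ‖x - y‖)
    (hg : Continuous g)
    (hlevel : ∀ r : ℝ, Bornology.IsBounded {x : E | f x + g x ≤ r})
    (K : E → ℝ) (K' : E → E) (m M : ℝ)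
    (hm : 0 < m) (hmM : m ≤ M)
    (hK : ∀ x, HasGradientAt K (K' x) x)
    (hKstrong : ∀ x y : E, K x + ⟪K' x, y - x⟫ + m / 2 * ‖y - x‖ ^ 2 ≤ K y)
    (hKlip : ∀ x y, ‖K' x - K' y‖ ≤ M * ‖x - y‖)
    (ε : ℝ) (hε : 0 < ε)
    :
    ∀ x u : E, ∀ t ∈ bregT f' g K K' ε x,
      2 * ((f t + g t) - (f u + g u)) ≤
        (M / ε + 2 + 3 * L) * ‖u - x‖ ^ 2 - ‖u - t‖ ^ 2
          - (m / ε - (L + 2)) * ‖x - t‖ ^ 2 :=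
  fun x u t ht ↦ (stmt6_general hf hlip hK hKstrong hKlip hε u ht).trans
    (by gcongr; linarith)
end
end
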